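/- Let 𝓓 = (Ω, 𝓑) be a β(i) design with parameter (v, k, d), i ≥ 2, c = k−d, b = |𝓑| and n = |S₁| (note n > 0). Then (b/n)·C(c+d, d+i−2)·C(v−k, i−2) ≤ 1 + (i−1)(v−k−i+1)(v−k−i+2) / ( (d+i−1)(c−i+1)(c−i+2) ). Moreover, equality holds if and only if the number |{B ∈ 𝓑 : |B ∩ X| = d+i−2}| is the same for every X ∈ S₁. -/

import Mathlib

open Finset

variable {α : Type*} [Fintype α] [DecidableEq α]

/-- `𝓑` is a design on the finite type `α` of cardinality `v`, with block size `k` and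
maximal pairwise block intersection size `d`. -/
def IsDesign (𝓑 : Finset (Finset α)) (v k d : ℕ) : Prop :=
  Fintype.card α = v ∧ 2 ≤ 𝓑.card ∧ d < k ∧ k < v ∧
  (∀ B ∈ 𝓑, B.card = k) ∧
  (∀ B ∈ 𝓑, ∀ C ∈ 𝓑, B ≠ C → (B ∩ C).card ≤ d) ∧
  (∃ B ∈ 𝓑, ∃ C ∈ 𝓑, B ≠ C ∧ (B ∩ C).card = d)

/-- `𝓑` is a `β(i)` design with parameters `(v, k, d)`: a design such that
`1 ≤ i ≤ (v - d + 1)/2` and every `(d + 2i - 1)`-element subset `X` of `Ω` admits a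
unique block `B` with `|X ∩ B| ≥ d + i`. -/
def IsBetaDesign (𝓑 : Finset (Finset α)) (v k d i : ℕ) : Prop :=
  IsDesign 𝓑 v k d ∧ 1 ≤ i ∧ 2 * i ≤ v - d + 1 ∧
  ∀ X : Finset α, X.card = d + 2 * i - 1 →
    ∃! B, B ∈ 𝓑 ∧ d + i ≤ (X ∩ B).card

/-- The family `S₁` of all `(d + 2(i-2))`-element subsets `X` of `Ω` such that
`|X ∩ B| ≤ d + i - 2` for every block `B ∈ 𝓑`. -/
def S1 (𝓑 : Finset (Finset α)) (d i : ℕ) : Finset (Finset α) :=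
  (Finset.univ : Finset (Finset α)).filter
    (fun X => X.card = d + 2 * (i - 2) ∧ ∀ B ∈ 𝓑, (X ∩ B).card ≤ d + i - 2)

/-- Sets with prescribed trace sizes on two disjoint sets and prescribed remainder. -/
lemma card_two_traces (P Q D : Finset α) (hPQ : Disjoint P Q) (hPD : Disjoint P D)
    (hQD : Disjoint Q D) (p q : ℕ) :
    ((univ : Finset (Finset α)).filter (fun X => X \ (P ∪ Q) = D ∧ (X ∩ P).card = p ∧
      (X ∩ Q).card = q)).card = P.card.choose p * Q.card.choose q := by
  rw [← card_powersetCard, ← card_powersetCard, ← card_product]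
  have e1 : ∀ S T : Finset α, S ⊆ P → T ⊆ Q → (S ∪ T ∪ D) ∩ P = S := by
    intro S T hS hT
    ext x
    have := @hS x
    have := @hT x
    have := @Finset.disjoint_left _ P Q
    have := @Finset.disjoint_left _ P D
    simp only [mem_inter, mem_union]
    grind
  have e2 : ∀ S T : Finset α, S ⊆ P → T ⊆ Q → (S ∪ T ∪ D) ∩ Q = T := by
    intro S T hS hT
    ext x
    have := @hS x
    have := @hT x
    have := @Finset.disjoint_left _ P Q
    have := @Finset.disjoint_left _ Q D
    simp only [mem_inter, mem_union]
    grind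
  have e3 : ∀ S T : Finset α, S ⊆ P → T ⊆ Q → (S ∪ T ∪ D) \ (P ∪ Q) = D := by
    intro S T hS hT
    ext x
    have := @hS x
    have := @hT x
    have := @Finset.disjoint_left _ P D
    have := @Finset.disjoint_left _ Q D
    simp only [mem_sdiff, mem_union]
    grind
  refine Finset.card_nbij' (fun X => (X ∩ P, X ∩ Q)) (fun Z => Z.1 ∪ Z.2 ∪ D) ?_ ?_ ?_ ?_
  · intro X hX
    have hX := (Finset.mem_filter.1 (Finset.mem_coe.1 hX)).2
    simp [mem_powersetCard, hX.2.1, hX.2.2]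
  · rintro ⟨S, T⟩ h
    simp only [coe_product, Set.mem_prod, mem_coe, mem_powersetCard] at h
    simp [-union_assoc, e1 S T h.1.1 h.2.1, e2 S T h.1.1 h.2.1, e3 S T h.1.1 h.2.1, h.1.2, h.2.2]
  · intro X hX
    have hX := (Finset.mem_filter.1 (Finset.mem_coe.1 hX)).2.1
    ext x
    simp only [← hX, mem_union, mem_inter, mem_sdiff]
    tauto
  · rintro ⟨S, T⟩ h
    simp only [coe_product, Set.mem_prod, mem_coe, mem_powersetCard] at h
    simp [-union_assoc, e1 S T h.1.1 h.2.1, e2 S T h.1.1 h.2.1]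

lemma card_one_trace (B : Finset α) (p q : ℕ) :
    ((univ : Finset (Finset α)).filter (fun X => X.card = p + q ∧ (X ∩ B).card = p)).card
      = B.card.choose p * (Fintype.card α - B.card).choose q := by
  rw [← card_compl, ← card_two_traces B Bᶜ ∅ disjoint_compl_right (by simp) (by simp) p q]
  congr 1
  ext X
  have h := card_inter_add_card_sdiff X B
  have h2 : X ∩ Bᶜ = X \ B := by ext x; simp
  simp only [mem_filter, mem_univ, true_and, union_compl, h2]
  have : X \ univ = ∅ := by simp
  simp only [this, true_and]
  omega

lemma pair_iff (B C X : Finset α) (d p q : ℕ) (h : (B ∩ C).card ≤ d) :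
    (X.card = d + p + q ∧ (X ∩ B).card = d + p ∧ (X ∩ C).card = d + q) ↔
    ((B ∩ C).card = d ∧ X \ ((B \ C) ∪ (C \ B)) = B ∩ C ∧ (X ∩ (B \ C)).card = p ∧
      (X ∩ (C \ B)).card = q) := by
  have a1 : (X ∩ B).card = (X ∩ (B ∩ C)).card + (X ∩ (B \ C)).card := by
    rw [← card_union_of_disjoint]
    · congr 1; ext x; simp; tauto
    · rw [disjoint_left]; intro x; simp; tauto
  have a2 : (X ∩ C).card = (X ∩ (B ∩ C)).card + (X ∩ (C \ B)).card := by
    rw [← card_union_of_disjoint]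
    · congr 1; ext x; simp; tauto
    · rw [disjoint_left]; intro x; simp; tauto
  have a3 : X.card = (X ∩ (B ∩ C)).card + (X ∩ (B \ C)).card + (X ∩ (C \ B)).card
      + (X \ (B ∪ C)).card := by
    rw [← card_union_of_disjoint, ← card_union_of_disjoint, ← card_union_of_disjoint]
    · congr 1; ext x; simp; tauto
    all_goals rw [disjoint_left]; intro x; simp; try tauto
  have a4 : (X \ ((B \ C) ∪ (C \ B))) = (X ∩ (B ∩ C)) ∪ (X \ (B ∪ C)) := by
    ext x; simp; tauto
  have a5 : (X ∩ (B ∩ C)).card ≤ (B ∩ C).card := card_le_card inter_subset_right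
  constructor
  · rintro ⟨h1, h2, h3⟩
    have z : (X \ (B ∪ C)).card = 0 := by omega
    have hd : (B ∩ C).card = d := by omega
    refine ⟨hd, ?_, by omega, by omega⟩
    rw [a4, card_eq_zero.1 z, union_empty]
    exact eq_of_subset_of_card_le inter_subset_right (by omega)
  · rintro ⟨h1, h2, h3, h4⟩
    rw [a4] at h2
    have z : X \ (B ∪ C) = ∅ := by
      rw [eq_empty_iff_forall_notMem]
      intro x hx
      have : x ∈ B ∩ C := by rw [← h2]; exact mem_union_right _ hx
      simp at hx this
      tauto
    rw [z, union_empty] at h2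
    rw [z, card_empty] at a3
    rw [h2] at a1 a2 a3
    omega

lemma pair_count (B C : Finset α) (d c p q : ℕ) (h : (B ∩ C).card ≤ d)
    (hB : B.card = d + c) (hC : C.card = d + c) :
    ((univ : Finset (Finset α)).filter (fun X => X.card = d + p + q ∧ (X ∩ B).card = d + p ∧
      (X ∩ C).card = d + q)).card =
    if (B ∩ C).card = d then c.choose p * c.choose q else 0 := by
  simp only [pair_iff B C _ d p q h]
  split_ifs with hd
  · have b1 := card_inter_add_card_sdiff B C
    have b2 := card_inter_add_card_sdiff C B
    rw [inter_comm C B] at b2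
    have c1 : (B \ C).card = c := by omega
    have c2 : (C \ B).card = c := by omega
    have := card_two_traces (B \ C) (C \ B) (B ∩ C) (by rw [disjoint_left]; intro x; simp; tauto)
      (by rw [disjoint_left]; intro x; simp; tauto)
      (by rw [disjoint_left]; intro x; simp; tauto) p q
    rw [c1, c2] at this
    rw [← this]
    simp only [hd, true_and]
  · simp [hd]

/-- The number of blocks meeting `B` in exactly `d` points. -/
lemma count_N (𝓑 : Finset (Finset α)) (v d c i : ℕ)
    (hB : IsBetaDesign 𝓑 v (d + c) d i) (B : Finset α) (hBm : B ∈ 𝓑) :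
    ((𝓑.erase B).filter (fun C => (B ∩ C).card = d)).card * (c.choose (i-1) * c.choose i)
      = (d + c).choose (d + (i-1)) * (v - (d + c)).choose i := by
  obtain ⟨⟨hv, -, -, -, hk, hd, -⟩, hi1, -, hu⟩ := hB
  have h1 := card_one_trace B (d + (i-1)) i
  rw [hk B hBm, hv] at h1
  rw [← h1, card_eq_sum_ones (filter _ (univ : Finset (Finset α)))]
  have h2 : ∀ Y ∈ (univ : Finset (Finset α)).filter
      (fun X => X.card = d + (i-1) + i ∧ (X ∩ B).card = d + (i-1)),
      1 = ∑ C ∈ 𝓑.erase B, if (Y ∩ C).card = d + i then 1 else 0 := by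
    intro Y hY
    simp only [mem_filter, mem_univ, true_and] at hY
    obtain ⟨C, ⟨hC, hYC⟩, hCu⟩ := hu Y (by omega)
    rw [← card_filter, eq_comm, card_eq_one]
    refine ⟨C, ?_⟩
    ext E
    simp only [mem_filter, mem_erase, mem_singleton]
    constructor
    · rintro ⟨⟨_, hE⟩, hE2⟩
      exact hCu E ⟨hE, hE2.ge⟩
    · rintro rfl
      have hne : E ≠ B := by rintro rfl; omega
      refine ⟨⟨hne, hC⟩, le_antisymm ?_ hYC⟩
      have hint := hd B hBm E hC hne.symm
      have a1 : (Y ∩ E).card ≤ (B ∩ E).card + (Y \ B).card := by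
        refine le_trans (card_le_card ?_) (card_union_le _ _)
        intro x; simp; tauto
      have a2 := card_inter_add_card_sdiff Y B
      omega
  rw [sum_congr rfl h2, sum_comm]
  have h3 : ∀ C ∈ 𝓑.erase B, (∑ Y ∈ (univ : Finset (Finset α)).filter
      (fun X => X.card = d + (i-1) + i ∧ (X ∩ B).card = d + (i-1)),
      if (Y ∩ C).card = d + i then 1 else 0) =
      if (B ∩ C).card = d then c.choose (i-1) * c.choose i else 0 := by
    intro C hC
    rw [mem_erase] at hC
    rw [← pair_count B C d c (i-1) i (hd B hBm C hC.2 hC.1.symm) (hk B hBm) (hk C hC.2),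
      ← card_filter, filter_filter]
    simp only [and_assoc]
  rw [sum_congr rfl h3, ← sum_filter, sum_const, smul_eq_mul]

lemma mem_S1_of (𝓑 : Finset (Finset α)) (v k d j : ℕ) (hD : IsDesign 𝓑 v k d)
    (B : Finset α) (hBm : B ∈ 𝓑) (X : Finset α) (hX : X.card = d + j + j)
    (hXB : (X ∩ B).card = d + j) : X ∈ S1 𝓑 d (j+2) := by
  obtain ⟨-, -, -, -, -, hd, -⟩ := hD
  simp only [S1, mem_filter, mem_univ, true_and]
  refine ⟨by omega, fun C hC => ?_⟩
  by_cases hne : B = C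
  · subst hne; omega
  have hint := hd B hBm C hC hne
  have a1 : (X ∩ C).card ≤ (B ∩ C).card + (X \ B).card := by
    refine le_trans (card_le_card ?_) (card_union_le _ _)
    intro x; simp; tauto
  have a2 := card_inter_add_card_sdiff X B
  omega

lemma first_moment (𝓑 : Finset (Finset α)) (v d c j : ℕ) (hD : IsDesign 𝓑 v (d + c) d) :
    ∑ X ∈ S1 𝓑 d (j+2), (𝓑.filter (fun B => (X ∩ B).card = d + j)).card
      = 𝓑.card * ((d + c).choose (d + j) * (v - (d + c)).choose j) := by
  simp only [card_filter]
  rw [sum_comm]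
  rw [← smul_eq_mul, ← sum_const]
  refine sum_congr rfl fun B hB => ?_
  have h1 := card_one_trace B (d + j) j
  rw [hD.2.2.2.2.1 B hB, hD.1] at h1
  rw [← h1, ← card_filter]
  congr 1
  ext X
  simp only [mem_filter, mem_univ, true_and]
  constructor
  · rintro ⟨h, h2⟩
    simp only [S1, mem_filter] at h
    exact ⟨by omega, h2⟩
  · rintro ⟨h, h2⟩
    exact ⟨mem_S1_of 𝓑 v (d+c) d j hD B hB X h h2, h2⟩

lemma second_moment (𝓑 : Finset (Finset α)) (v d c j : ℕ) (hD : IsDesign 𝓑 v (d + c) d) :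
    ∑ X ∈ S1 𝓑 d (j+2), (𝓑.filter (fun B => (X ∩ B).card = d + j)).card ^ 2
      = ∑ B ∈ 𝓑, ((d + c).choose (d + j) * (v - (d + c)).choose j +
        ((𝓑.erase B).filter (fun C => (B ∩ C).card = d)).card * (c.choose j * c.choose j)) := by
  have e : ∀ X : Finset α, (𝓑.filter (fun B => (X ∩ B).card = d + j)).card ^ 2
      = ∑ B ∈ 𝓑, ∑ C ∈ 𝓑, if ((X ∩ B).card = d + j ∧ (X ∩ C).card = d + j) then 1 else 0 := by
    intro X
    rw [sq, card_filter, sum_mul_sum]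
    refine sum_congr rfl fun B _ => sum_congr rfl fun C _ => ?_
    split_ifs <;> simp_all
  simp only [e]
  rw [sum_comm]
  refine sum_congr rfl fun B hB => ?_
  rw [sum_comm, ← add_sum_erase _ _ hB]
  have key : ∀ C ∈ 𝓑, (∑ X ∈ S1 𝓑 d (j+2),
      if ((X ∩ B).card = d + j ∧ (X ∩ C).card = d + j) then 1 else 0) =
      ((univ : Finset (Finset α)).filter (fun X => X.card = d + j + j ∧ (X ∩ B).card = d + j ∧
        (X ∩ C).card = d + j)).card := by
    intro C _
    rw [← card_filter]
    congr 1
    ext X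
    simp only [mem_filter, mem_univ, true_and]
    constructor
    · rintro ⟨h, h2⟩
      simp only [S1, mem_filter] at h
      exact ⟨by omega, h2⟩
    · rintro ⟨h, h2⟩
      exact ⟨mem_S1_of 𝓑 v (d+c) d j hD B hB X h h2.1, h2⟩
  congr 1
  · rw [key B hB]
    have h1 := card_one_trace B (d + j) j
    rw [hD.2.2.2.2.1 B hB, hD.1] at h1
    rw [← h1]
    simp only [and_self]
  · rw [← smul_eq_mul, ← sum_const, sum_filter]
    refine sum_congr rfl fun C hC => ?_
    rw [mem_erase] at hC
    rw [key C hC.2, pair_count B C d c j j (hD.2.2.2.2.2.1 B hB C hC.2 hC.1.symm)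
      (hD.2.2.2.2.1 B hB) (hD.2.2.2.2.1 C hC.2)]

/-- Ratio of consecutive binomials over the reals. -/
lemma choose_step (n r : ℕ) (h : r ≤ n) :
    (n.choose (r+1) : ℝ) * (r + 1) = n.choose r * ((n : ℝ) - r) := by
  have := Nat.choose_succ_right_eq n r
  rw [← Nat.cast_sub h]
  exact_mod_cast this

lemma binom_ratio (N d c w j : ℕ) (hc : j + 2 ≤ c) (hw : j + 2 ≤ w)
    (h : N * (c.choose (j+1) * c.choose (j+2)) = (d+c).choose (d+(j+1)) * w.choose (j+2)) :
    (N : ℝ) * (c.choose j * c.choose j) =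
      ((j + 1 : ℝ) * ((w : ℝ) - j - 1) * ((w : ℝ) - j) /
        ((d + j + 1 : ℝ) * ((c : ℝ) - j - 1) * ((c : ℝ) - j))) *
      ((d+c).choose (d+j) * w.choose j) := by
  have h' : (N : ℝ) * (c.choose (j+1) * c.choose (j+2))
    = (d+c).choose (d+(j+1)) * w.choose (j+2) := by exact_mod_cast h
  have c1 := choose_step c j (by omega)
  have c2 := choose_step c (j+1) (by omega)
  have w1 := choose_step w j (by omega)
  have w2 := choose_step w (j+1) (by omega)
  have k1 := choose_step (d+c) (d+j) (by omega)
  rw [show d + (j+1) = d + j + 1 by ring] at h'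
  push_cast at c2 w2 k1
  have hc' : (j : ℝ) + 2 ≤ c := by exact_mod_cast hc
  have p1 : (0:ℝ) < (c : ℝ) - j - 1 := by linarith
  have p2 : (0:ℝ) < (c : ℝ) - j := by linarith
  have pj : (0:ℝ) < (j : ℝ) + 1 := by positivity
  have pj2 : (0:ℝ) < (j : ℝ) + 1 + 1 := by positivity
  have pd : (0:ℝ) < (d : ℝ) + j + 1 := by positivity
  have C1 := eq_div_of_mul_eq pj.ne' c1
  have C2 := eq_div_of_mul_eq pj2.ne' c2
  have W1 := eq_div_of_mul_eq pj.ne' w1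
  have W2 := eq_div_of_mul_eq pj2.ne' w2
  have K1 := eq_div_of_mul_eq pd.ne' k1
  rw [C2, W2, C1, W1, K1] at h'
  generalize (c.choose j : ℝ) = x at *
  generalize (w.choose j : ℝ) = y at *
  generalize ((d+c).choose (d+j) : ℝ) = z at *
  clear C1 C2 W1 W2 K1 c1 c2 w1 w2 k1
  rw [div_mul_eq_mul_div, eq_div_iff (by positivity)]
  field_simp at h'
  apply mul_right_cancel₀ p2.ne'
  linear_combination h'

/-- **Proposition 5.3.** Let `𝓑` be a `β(i)` design with parameter `(v, k, d)`, `i ≥ 2`,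
`c = k - d`, `b = |𝓑|` and `n = |S₁| > 0`.  Then
`(b/n) C(c+d, d+i-2) C(v-k, i-2) ≤ 1 + (i-1)(v-k-i+1)(v-k-i+2)/((d+i-1)(c-i+1)(c-i+2))`,
with equality if and only if the number of blocks `B` with `|B ∩ X| = d + i - 2` does not
depend on the choice of `X ∈ S₁`. -/
theorem prop5_3 (𝓑 : Finset (Finset α)) (v k d i c : ℕ)
    (hB : IsBetaDesign 𝓑 v k d i) (hi : 2 ≤ i) (hc : c = k - d)
    (n : ℕ) (hn : n = (S1 𝓑 d i).card) (hpos : 0 < n) :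
    ((𝓑.card : ℝ) / (n : ℝ)) * ((c + d).choose (d + i - 2) : ℝ) * ((v - k).choose (i - 2) : ℝ)
      ≤ 1 + ((i : ℝ) - 1) * ((v : ℝ) - (k : ℝ) - (i : ℝ) + 1) * ((v : ℝ) - (k : ℝ) - (i : ℝ) + 2)
          / (((d : ℝ) + (i : ℝ) - 1) * ((c : ℝ) - (i : ℝ) + 1) * ((c : ℝ) - (i : ℝ) + 2)) ∧
    (((𝓑.card : ℝ) / (n : ℝ)) * ((c + d).choose (d + i - 2) : ℝ) * ((v - k).choose (i - 2) : ℝ)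
      = 1 + ((i : ℝ) - 1) * ((v : ℝ) - (k : ℝ) - (i : ℝ) + 1) * ((v : ℝ) - (k : ℝ) - (i : ℝ) + 2)
          / (((d : ℝ) + (i : ℝ) - 1) * ((c : ℝ) - (i : ℝ) + 1) * ((c : ℝ) - (i : ℝ) + 2)) ↔
      ∃ m : ℕ, ∀ X ∈ S1 𝓑 d i,
        (𝓑.filter (fun B => (X ∩ B).card = d + i - 2)).card = m) := by
  subst hn
  obtain ⟨j, rfl⟩ : ∃ j, i = j + 2 := ⟨i - 2, by omega⟩
  have hdk : d < k := hB.1.2.2.1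
  have hkv : k < v := hB.1.2.2.2.1
  obtain rfl : k = d + c := by omega
  have hD := hB.1
  have hcj : j + 2 ≤ c := by
    obtain ⟨⟨hv, -, -, -, hk, -, -⟩, -, h2, hu⟩ := hB
    obtain ⟨X, -, hX⟩ := exists_subset_card_eq (s := (univ : Finset α)) (n := d + 2 * (j+2) - 1)
      (by rw [card_univ, hv]; omega)
    obtain ⟨B, ⟨hBm, hle⟩, -⟩ := hu X hX
    have : (X ∩ B).card ≤ B.card := card_le_card inter_subset_right
    rw [hk B hBm] at this
    omega
  have hw : j + 2 ≤ v - (d + c) := by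
    obtain ⟨hv, -, -, -, hk, -, B, hBm, C, hCm, -, hBC⟩ := hD
    have h1 := card_union_add_card_inter B C
    have h2 : (B ∪ C).card ≤ v := by rw [← hv]; exact card_le_univ _
    rw [hk B hBm, hk C hCm, hBC] at h1
    omega
  have f1 := first_moment 𝓑 v d c j hD
  have f2 := second_moment 𝓑 v d c j hD
  have hR := fun B hBm => binom_ratio _ d c (v - (d+c)) j hcj hw
    (count_N 𝓑 v d c (j+2) hB B hBm)
  set A : ℝ := ((d+c).choose (d+j) : ℝ) * ((v - (d+c)).choose j : ℝ) with hA
  set R : ℝ := ((j + 1 : ℝ) * (((v - (d+c) : ℕ) : ℝ) - j - 1) * (((v - (d+c) : ℕ) : ℝ) - j) /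
        ((d + j + 1 : ℝ) * ((c : ℝ) - j - 1) * ((c : ℝ) - j))) with hRdef
  set m : Finset α → ℕ := fun X => (𝓑.filter (fun B => (X ∩ B).card = d + j)).card with hm
  have F1 : ∑ X ∈ S1 𝓑 d (j+2), (m X : ℝ) = 𝓑.card * A := by
    rw [hA]; exact_mod_cast f1
  have F2 : ∑ X ∈ S1 𝓑 d (j+2), (m X : ℝ)^2 = 𝓑.card * A * (1 + R) := by
    have f2' := congrArg (Nat.cast : ℕ → ℝ) f2
    push_cast at f2'
    rw [f2', sum_congr rfl (fun B hBm => by rw [hR B hBm]), sum_const, nsmul_eq_mul, hA]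
    ring
  have hApos : 0 < A := by
    have h1 : 0 < (d+c).choose (d+j) := Nat.choose_pos (by omega)
    have h2 : 0 < (v - (d+c)).choose j := Nat.choose_pos (by omega)
    rw [hA]; positivity
  have hbpos : (0:ℝ) < 𝓑.card := by
    have : 0 < 𝓑.card := by have := hD.2.1; omega
    exact_mod_cast this
  have hnpos : (0:ℝ) < (S1 𝓑 d (j+2)).card := by exact_mod_cast hpos
  have hRHS : 1 + (((j + 2 : ℕ) : ℝ) - 1) * ((v : ℝ) - ((d + c : ℕ) : ℝ) - ((j + 2 : ℕ) : ℝ) + 1)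
      * ((v : ℝ) - ((d + c : ℕ) : ℝ) - ((j + 2 : ℕ) : ℝ) + 2)
          / (((d : ℝ) + ((j + 2 : ℕ) : ℝ) - 1) * ((c : ℝ) - ((j + 2 : ℕ) : ℝ) + 1)
            * ((c : ℝ) - ((j + 2 : ℕ) : ℝ) + 2)) = 1 + R := by
    rw [hRdef, Nat.cast_sub hkv.le]
    push_cast
    ring_nf
  have hLHS : ((𝓑.card : ℝ) / ((S1 𝓑 d (j+2)).card : ℝ)) * ((c + d).choose (d + (j + 2) - 2) : ℝ)
      * ((v - (d + c)).choose (j + 2 - 2) : ℝ) = 𝓑.card * A / (S1 𝓑 d (j+2)).card := by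
    rw [hA, show d + (j + 2) - 2 = d + j by omega, show j + 2 - 2 = j by omega, add_comm c d]
    ring
  rw [hRHS, hLHS, show d + (j + 2) - 2 = d + j by omega]
  set n : ℝ := ((S1 𝓑 d (j+2)).card : ℝ) with hn
  set μ : ℝ := 𝓑.card * A / n with hμ
  have hμn : 𝓑.card * A = μ * n := (div_mul_cancel₀ _ hnpos.ne').symm
  have hμpos : 0 < μ := div_pos (mul_pos hbpos hApos) hnpos
  rw [hμn] at F1 F2
  have hvar : ∑ X ∈ S1 𝓑 d (j+2), ((m X : ℝ) - μ)^2 = μ * n * (1 + R - μ) := by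
    have : ∀ X, ((m X : ℝ) - μ)^2 = (m X : ℝ)^2 - 2 * μ * m X + μ^2 := fun X => by ring
    simp only [this]
    rw [sum_add_distrib, sum_sub_distrib, ← mul_sum, F1, F2, sum_const, nsmul_eq_mul, ← hn]
    ring
  have hnn : ∀ X ∈ S1 𝓑 d (j+2), 0 ≤ ((m X : ℝ) - μ)^2 := fun X _ => sq_nonneg _
  have hμnpos : 0 < μ * n := mul_pos hμpos hnpos
  refine ⟨?_, ?_, ?_⟩
  · have h0 := sum_nonneg hnn
    rw [hvar] at h0
    have := nonneg_of_mul_nonneg_right h0 hμnpos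
    linarith
  · intro heq
    rw [← heq, sub_self, mul_zero, sum_eq_zero_iff_of_nonneg hnn] at hvar
    have hall : ∀ X ∈ S1 𝓑 d (j+2), (m X : ℝ) = μ := fun X hX => by
      have := pow_eq_zero_iff (two_ne_zero) |>.1 (hvar X hX)
      linarith
    obtain ⟨X₀, hX₀⟩ := card_pos.1 hpos
    refine ⟨m X₀, fun X hX => ?_⟩
    have : (m X : ℝ) = m X₀ := by rw [hall X hX, hall X₀ hX₀]
    exact_mod_cast this
  · rintro ⟨M, hM⟩
    have hM' : ∀ X ∈ S1 𝓑 d (j+2), (m X : ℝ) = M := fun X hX => by exact_mod_cast hM X hX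
    have hMμ : (M : ℝ) = μ := by
      rw [sum_congr rfl hM', sum_const, nsmul_eq_mul, ← hn, mul_comm] at F1
      exact mul_right_cancel₀ hnpos.ne' F1
    rw [sum_eq_zero (fun X hX => by rw [hM' X hX, hMμ, sub_self, zero_pow two_ne_zero])] at hvar
    rcases mul_eq_zero.1 hvar.symm with h | h
    · exact absurd h hμnpos.ne'
    · linarith
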